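/- arXiv:2203.12704 — 3 statements merged into one kernel-verified Lean document; each statement's English description precedes it below -/
import Mathlib

section
/- Let k be a subfield of ℂ, let G be a finite group of odd order, and let p be a prime. Suppose K is a minimal normal subgroup of G such that K ∩ G' = 1, where G' is the derived subgroup of G. If acd_{k,p'}(G) ≤ 3, then acd_{k,p'}(G/K) ≤ acd_{k,p'}(G). -/
/-!
Since `[G, K] ≤ K ∩ G' = 1`, the minimal normal subgroup `K` is central, hence generated by any
`z ≠ 1` in it, and on every irreducible representation `z` acts as a scalar (Schur). The characters
`χ ∈ IrrKP G k p` with `χ(z) = χ(1)` are exactly the inflations of those in `IrrKP (G ⧸ K) k p`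
(`IrrKP.inflate`, `IrrKP.exists_deflate`).

If some linear `μ ∈ IrrKP G k p` is nontrivial on `K`, then it is faithful on `K` by minimality, so
the scalar by which `z` acts is always a power of `μ(z)`. Twisting by powers of `μ`
(`IrrKP.twist`) gives a degree-preserving bijection of `IrrKP G k p` with `|K|` copies of
`IrrKP (G ⧸ K) k p`, and the two averages are equal.

Otherwise every `χ ∈ IrrKP G k p` with `χ(z) ≠ χ(1)` is nonlinear. Degrees divide the odd number
`|G|` (`FDRep.finrank_dvd_card`), so such a `χ` has degree at least 3. As the average over
`IrrKP G k p` is at most 3, removing these characters cannot increase it.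

Irreducibility of inflated and twisted representations is read off from the norm of the character.
-/

/-- The set of irreducible complex characters of `G`. -/
noncomputable def Irr (G : Type) [Group G] : Set (G → ℂ) :=
  {χ | ∃ V : FDRep ℂ G, CategoryTheory.Simple V ∧ χ = FDRep.character V}

/-- A group `G` has a normal `p`-complement: a normal subgroup of order coprime
to `p` whose index is a power of `p`. -/
def HasNormalPComplement (G : Type) [Group G] (p : ℕ) : Prop :=
  ∃ N : Subgroup G, N.Normal ∧ Nat.Coprime (Nat.card N) p ∧ ∃ n : ℕ, N.index = p ^ n

/-- The irreducible complex characters of `G` with values in `k` whose degree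
is not divisible by `p`. -/
noncomputable def IrrKP (G : Type) [Group G] (k : Subfield ℂ) (p : ℕ) : Set (G → ℂ) :=
  {χ | ∃ V : FDRep ℂ G, CategoryTheory.Simple V ∧ χ = FDRep.character V ∧
       (∀ g, χ g ∈ k) ∧ ¬ (p ∣ Module.finrank ℂ V)}

/-- The average of the degrees of the characters in `IrrKP G k p`. -/
noncomputable def acdKP (G : Type) [Group G] (k : Subfield ℂ) (p : ℕ) : ℝ :=
  (∑ᶠ χ ∈ IrrKP G k p, (χ 1).re) / (Nat.card (IrrKP G k p))

open CategoryTheory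

/-- Schur's lemma: a linear endomorphism commuting with a simple complex representation is a
scalar. -/
lemma FDRep.exists_eq_smul_one {G : Type} [Group G] (V : FDRep ℂ G)
    [Simple V] (f : V →ₗ[ℂ] V) (hf : ∀ g, f ∘ₗ V.ρ g = V.ρ g ∘ₗ f) :
    ∃ c : ℂ, f = c • (1 : V →ₗ[ℂ] V) := by
  have h1 : Module.finrank ℂ (V ⟶ V) = 1 := finrank_endomorphism_simple_eq_one ℂ V
  rw [← LinearEquiv.finrank_eq (Representation.linHom.invariantsEquivFDRepHom V V)] at h1
  have hmem : ∀ f : V →ₗ[ℂ] V, (∀ g, f ∘ₗ V.ρ g = V.ρ g ∘ₗ f) →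
      f ∈ (Representation.linHom V.ρ V.ρ).invariants := by
    intro f hf g
    rw [Representation.linHom_apply, hf, ← LinearMap.comp_assoc]
    change (V.ρ g * V.ρ g⁻¹) ∘ₗ f = f
    rw [← map_mul]; simp [Module.End.one_eq_id]
  have hne : (1 : V →ₗ[ℂ] V) ≠ 0 := by
    intro h0
    rw [finrank_eq_one_iff'] at h1
    obtain ⟨v, hv, -⟩ := h1
    apply hv
    ext1
    have : ∀ x : V →ₗ[ℂ] V, x = 0 := fun x => by rw [← one_mul x, h0, zero_mul]
    exact this _
  have hone := hmem 1 (fun g => rfl)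
  obtain ⟨c, hc⟩ := (finrank_eq_one_iff_of_nonzero' (⟨1, hone⟩ :
    (Representation.linHom V.ρ V.ρ).invariants) (fun h => hne (congrArg Subtype.val h))).1 h1
    ⟨f, hmem f hf⟩
  exact ⟨c, (congrArg Subtype.val hc).symm⟩

lemma FDRep.finrank_ne_zero_of_simple {G : Type} [Group G] [Fintype G] (V : FDRep ℂ G)
    [hV : Simple V] : Module.finrank ℂ V ≠ 0 := by
  intro h0
  have := (FDRep.simple_iff_char_is_norm_one V).1 hV
  have hz : ∀ g, V.character g = 0 := by
    intro g
    have := Module.finrank_zero_iff.1 h0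
    have : V.ρ g = 0 := LinearMap.ext fun x => Subsingleton.elim _ _
    simp [FDRep.character, this]
  simp only [hz, mul_zero, Finset.sum_const_zero] at this
  exact Nat.card_pos.ne' (by exact_mod_cast this.symm)

/-- Character values are sums of eigenvalues, which are roots of unity. -/
lemma FDRep.isIntegral_character {G : Type} [Group G] [Fintype G] (V : FDRep ℂ G) (g : G) :
    IsIntegral ℤ (V.character g) := by
  rw [FDRep.character, Module.End.trace_eq_sum_roots_charpoly_of_splits
    (IsAlgClosed.splits _)]
  refine IsIntegral.multiset_sum fun x hx => ?_
  have hx' : Module.End.HasEigenvalue (V.ρ g) x := by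
    rw [Module.End.hasEigenvalue_iff_isRoot_charpoly]
    exact Polynomial.isRoot_of_mem_roots hx
  obtain ⟨v, hv⟩ := hx'.exists_hasEigenvector
  have hp := hv.pow_apply (orderOf g)
  rw [← map_pow, pow_orderOf_eq_one, map_one, Module.End.one_apply] at hp
  have h1 : x ^ orderOf g = 1 := by
    have : (x ^ orderOf g - 1) • v = 0 := by rw [sub_smul, ← hp, one_smul, sub_self]
    exact sub_eq_zero.1 ((smul_eq_zero.1 this).resolve_right hv.2)
  exact IsIntegral.of_pow (orderOf_pos g) (h1 ▸ isIntegral_one)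

/-- The degree of an irreducible complex character divides the group order. With `A` the ring of
algebraic integers in `ℂ`, the element `∑ χ(g⁻¹) g` of `A[G]` is integral over `A` and acts as the
scalar `|G| / χ(1)`, which is therefore a rational algebraic integer. -/
lemma FDRep.finrank_dvd_card {G : Type} [Group G] [Fintype G] (V : FDRep ℂ G)
    [hV : Simple V] : Module.finrank ℂ V ∣ Nat.card G := by
  have hd := V.finrank_ne_zero_of_simple
  have hsum := (FDRep.simple_iff_char_is_norm_one V).1 hV
  let A := integralClosure ℤ ℂ
  let a : G → A := fun g => ⟨V.character g⁻¹, V.isIntegral_character _⟩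
  let e : MonoidAlgebra A G := ∑ g, MonoidAlgebra.single g (a g)
  let φ : MonoidAlgebra A G →ₐ[A] Module.End ℂ V := MonoidAlgebra.lift A (Module.End ℂ V) G V.ρ
  have hφ : φ e = ∑ g, V.character g⁻¹ • V.ρ g := by
    simp only [e, φ, map_sum, MonoidAlgebra.lift_single]
    rfl
  obtain ⟨c, hc⟩ := V.exists_eq_smul_one (φ e) (by
    intro h
    rw [hφ]
    change (∑ g, V.character g⁻¹ • V.ρ g) * V.ρ h = V.ρ h * (∑ g, V.character g⁻¹ • V.ρ g)
    rw [Finset.sum_mul, Finset.mul_sum]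
    refine Fintype.sum_equiv (MulAut.conj h⁻¹).toEquiv _ _ fun g => ?_
    have : (MulAut.conj h⁻¹).toEquiv g = h⁻¹ * g * h := by simp
    rw [this, smul_mul_assoc, mul_smul_comm, ← map_mul, ← map_mul]
    congr 1
    · rw [show (h⁻¹ * g * h)⁻¹ = h⁻¹ * g⁻¹ * h⁻¹⁻¹ by group, FDRep.char_conj]
    · congr 1; group)
  have htr : c * Module.finrank ℂ V = Nat.card G := by
    have := congrArg (LinearMap.trace ℂ V) (hφ.symm.trans hc)
    simp only [map_sum, map_smul, LinearMap.trace_one, smul_eq_mul] at this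
    rw [← this, ← hsum]
    exact Finset.sum_congr rfl fun g _ => mul_comm _ _
  have hint : IsIntegral A (φ e) := (IsIntegral.of_finite A e).map φ
  have hcA : IsIntegral A c := by
    have : Nontrivial V := Module.nontrivial_of_finrank_pos (R := ℂ) (Nat.pos_of_ne_zero hd)
    have h2 : IsIntegral A (algebraMap ℂ (Module.End ℂ V) c) := by
      rw [Algebra.algebraMap_eq_smul_one, ← hc]; exact hint
    exact (isIntegral_algHom_iff (IsScalarTower.toAlgHom A ℂ (Module.End ℂ V))
      (FaithfulSMul.algebraMap_injective ℂ (Module.End ℂ V))).1 h2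
  have hcZ : IsIntegral ℤ c := isIntegral_trans c hcA
  have hq : c = algebraMap ℚ ℂ ((Nat.card G : ℚ) / Module.finrank ℂ V) := by
    rw [map_div₀, map_natCast, map_natCast, ← htr]
    field_simp
  rw [hq, isIntegral_algebraMap_iff (algebraMap ℚ ℂ).injective,
    IsIntegrallyClosed.isIntegral_iff] at hcZ
  obtain ⟨m, hm⟩ := hcZ
  have hdQ : (Module.finrank ℂ V : ℚ) ≠ 0 := by exact_mod_cast hd
  rw [eq_div_iff hdQ] at hm
  have : (m * Module.finrank ℂ V : ℤ) = (Nat.card G : ℤ) := by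
    rw [eq_intCast] at hm
    exact_mod_cast hm
  exact Int.natCast_dvd_natCast.1 ⟨m, by rw [← this, mul_comm]⟩

/-- Distinct irreducible characters are orthogonal for the bilinear form
`|G|⁻¹ ∑ f(g) h(g⁻¹)`, hence linearly independent functions on the finite set `G`. -/
lemma finite_IrrKP (G : Type) [Group G] [Fintype G] (k : Subfield ℂ) (p : ℕ) :
    (IrrKP G k p).Finite := by
  have := invertibleOfNonzero (NeZero.ne (Nat.card G : ℂ))
  have hli : LinearIndependent ℂ ((↑) : IrrKP G k p → (G → ℂ)) := by
    let B : (G → ℂ) →ₗ[ℂ] (G → ℂ) →ₗ[ℂ] ℂ := LinearMap.mk₂ ℂ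
      (fun f h => (Nat.card G : ℂ)⁻¹ * ∑ g, f g * h g⁻¹)
      (by intros; simp [add_mul, mul_add, Finset.sum_add_distrib])
      (by intros; simp [Finset.mul_sum]; refine Finset.sum_congr rfl fun _ _ => by ring)
      (by intros; simp [mul_add, Finset.sum_add_distrib])
      (by intros; simp [Finset.mul_sum]; refine Finset.sum_congr rfl fun _ _ => by ring)
    refine LinearMap.BilinForm.linearIndependent_of_iIsOrtho (B := B) ?_ ?_
    · rintro ⟨_, V, hV, rfl, _⟩ ⟨_, W, hW, rfl, _⟩ hne
      change B V.character W.character = 0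
      simp only [B, LinearMap.mk₂_apply]
      rw [FDRep.char_orthonormal, if_neg]
      rintro ⟨i⟩
      exact hne (Subtype.ext (FDRep.char_iso i))
    · rintro ⟨_, V, hV, rfl, _⟩ h
      change B V.character V.character = 0 at h
      simp only [B, LinearMap.mk₂_apply] at h
      rw [FDRep.char_orthonormal, if_pos ⟨Iso.refl _⟩] at h
      exact one_ne_zero h
  have : Finite (IrrKP G k p) := hli.finite
  exact Set.toFinite _

/-- In a group of odd order degrees are odd, so a nonlinear irreducible character has degree at
least 3. -/
lemma IrrKP.degree {G : Type} [Group G] [Fintype G] (hG : Odd (Nat.card G)) {k : Subfield ℂ}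
    {p : ℕ} {χ : G → ℂ} (hχ : χ ∈ IrrKP G k p) :
    ∃ d : ℕ, χ 1 = d ∧ (d = 1 ∨ 3 ≤ d) := by
  obtain ⟨V, hV, rfl, -⟩ := hχ
  refine ⟨Module.finrank ℂ V, V.char_one, ?_⟩
  have h1 : Odd (Module.finrank ℂ V) := hG.of_dvd_nat V.finrank_dvd_card
  obtain ⟨m, hm⟩ := h1
  omega

lemma IrrKP.apply_one_ne_zero {G : Type} [Group G] [Fintype G] {k : Subfield ℂ}
    {p : ℕ} {χ : G → ℂ} (hχ : χ ∈ IrrKP G k p) : χ 1 ≠ 0 := by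
  obtain ⟨V, hV, rfl, -⟩ := hχ
  rw [V.char_one]
  exact_mod_cast V.finrank_ne_zero_of_simple

lemma one_mem_IrrKP (G : Type) [Group G] [Fintype G] (k : Subfield ℂ) {p : ℕ} (hp : p.Prime) :
    (fun _ => 1) ∈ IrrKP G k p := by
  let V : FDRep ℂ G := FDRep.of (Representation.trivial ℂ G ℂ)
  have hχ : V.character = fun _ => 1 := by
    ext g
    change LinearMap.trace ℂ ℂ (1 : ℂ →ₗ[ℂ] ℂ) = 1
    simp
  refine ⟨V, ?_, hχ.symm, fun _ => k.one_mem, ?_⟩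
  · rw [FDRep.simple_iff_char_is_norm_one, hχ]; simp
  · change ¬ p ∣ Module.finrank ℂ ℂ
    simpa using hp.one_lt.ne'

/-- Inflation preserves and reflects irreducibility, because the norms of the two characters
agree: every coset of `K` contributes `|K|` equal terms. -/
lemma FDRep.simple_iff_of_character_eq_mk {G : Type} [Group G] [Fintype G]
    (K : Subgroup G) [K.Normal] {V : FDRep ℂ (G ⧸ K)} {W : FDRep ℂ G}
    (h : ∀ g : G, W.character g = V.character g) : Simple W ↔ Simple V := by
  classical
  rw [FDRep.simple_iff_char_is_norm_one, FDRep.simple_iff_char_is_norm_one]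
  have hsum : ∑ g : G, W.character g * W.character g⁻¹ =
      Nat.card K * ∑ x : G ⧸ K, V.character x * V.character x⁻¹ := by
    rw [← Finset.sum_fiberwise Finset.univ (fun g : G => (g : G ⧸ K)), Finset.mul_sum]
    refine Finset.sum_congr rfl fun x _ => ?_
    rw [Finset.sum_congr rfl (g := fun _ => V.character x * V.character x⁻¹), Finset.sum_const,
      nsmul_eq_mul]
    · congr 2
      obtain ⟨g, rfl⟩ := QuotientGroup.mk_surjective x
      rw [← Fintype.card_subtype, ← Nat.card_eq_fintype_card]
      have e := (QuotientGroup.mk' K).fiberEquivKer g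
      rw [QuotientGroup.ker_mk'] at e
      exact Nat.card_congr e
    · intro g hg
      obtain rfl : (g : G ⧸ K) = x := by simpa using hg
      rw [h, h]; rfl
  rw [hsum, Subgroup.card_eq_card_quotient_mul_card_subgroup K]
  push_cast
  rw [mul_comm]
  exact mul_left_inj' (by exact_mod_cast Nat.card_pos.ne')

lemma IrrKP.inflate {G : Type} [Group G] [Fintype G] {k : Subfield ℂ} {p : ℕ}
    (K : Subgroup G) [K.Normal] {ψ : G ⧸ K → ℂ} (hψ : ψ ∈ IrrKP (G ⧸ K) k p) :
    (fun g : G => ψ g) ∈ IrrKP G k p := by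
  obtain ⟨V, hV, rfl, hk, hd⟩ := hψ
  let W : FDRep ℂ G := FDRep.of (V.ρ.comp (QuotientGroup.mk' K))
  exact ⟨W, (FDRep.simple_iff_of_character_eq_mk K (V := V) (W := W) fun _ => rfl).2 hV, rfl,
    fun g => hk g, hd⟩

lemma FDRep.exists_apply_eq_smul_of_mem_center {G : Type} [Group G] (V : FDRep ℂ G) [Simple V]
    {z : G} (hz : z ∈ Subgroup.center G) : ∃ c : ℂ, V.ρ z = c • (1 : V →ₗ[ℂ] V) := by
  refine V.exists_eq_smul_one _ fun g => ?_
  change V.ρ z * V.ρ g = V.ρ g * V.ρ z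
  rw [← map_mul, ← map_mul, Subgroup.mem_center_iff.1 hz g]

/-- If `K` is generated by a central element `z` and `χ(z) = χ(1)`, then `z`, hence `K`, acts
trivially, so that `χ` is inflated from `G ⧸ K`. -/
lemma IrrKP.exists_deflate {G : Type} [Group G] [Fintype G] {k : Subfield ℂ} {p : ℕ}
    (K : Subgroup G) [K.Normal] {z : G} (hz : z ∈ Subgroup.center G)
    (hzK : Subgroup.zpowers z = K) {χ : G → ℂ} (hχ : χ ∈ IrrKP G k p) (h1 : χ z = χ 1) :
    ∃ ψ ∈ IrrKP (G ⧸ K) k p, χ = fun g : G => ψ g := by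
  have hne := IrrKP.apply_one_ne_zero hχ
  obtain ⟨W, hW, rfl, hk, hd⟩ := hχ
  obtain ⟨c, hc⟩ := W.exists_apply_eq_smul_of_mem_center hz
  have hc1 : c = 1 := by
    have h2 : W.character z = c * W.character 1 := by
      simp [FDRep.character, hc]
    rw [h1] at h2
    exact mul_right_cancel₀ hne (by rw [← h2, one_mul])
  have hker : K ≤ W.ρ.ker := by
    rw [← hzK, Subgroup.zpowers_le, MonoidHom.mem_ker, hc, hc1, one_smul]
  let V : FDRep ℂ (G ⧸ K) := FDRep.of (QuotientGroup.lift K W.ρ hker)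
  have hVW : ∀ g : G, W.character g = V.character g := fun _ => rfl
  refine ⟨V.character, ⟨V, (FDRep.simple_iff_of_character_eq_mk K hVW).1 hW, rfl, ?_, hd⟩, rfl⟩
  intro x
  obtain ⟨g, rfl⟩ := QuotientGroup.mk_surjective x
  exact hk g

/-- Multiplication by a `k`-valued linear character preserves `IrrKP G k p`. -/
lemma IrrKP.twist {G : Type} [Group G] [Fintype G] {k : Subfield ℂ} {p : ℕ}
    {χ : G → ℂ} (hχ : χ ∈ IrrKP G k p) (μ : G →* ℂ) (hμ : ∀ g, μ g ∈ k) :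
    (fun g => μ g * χ g) ∈ IrrKP G k p := by
  obtain ⟨V, hV, rfl, hk, hd⟩ := hχ
  let ρ : Representation ℂ G V :=
    { toFun := fun g => μ g • V.ρ g
      map_one' := by simp
      map_mul' := fun a b => by
        rw [map_mul, map_mul, smul_mul_smul_comm] }
  let W : FDRep ℂ G := FDRep.of ρ
  have hW : W.character = fun g => μ g * V.character g := by
    ext g
    change LinearMap.trace ℂ V (μ g • V.ρ g) = _
    rw [map_smul, smul_eq_mul]; rfl
  refine ⟨W, ?_, hW.symm, fun g => k.mul_mem (hμ g) (hk g), hd⟩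
  rw [FDRep.simple_iff_char_is_norm_one] at hV ⊢
  rw [hW, ← hV]
  refine Finset.sum_congr rfl fun g _ => ?_
  have : μ g * μ g⁻¹ = 1 := by rw [← map_mul, mul_inv_cancel, map_one]
  linear_combination (V.character g * V.character g⁻¹) * this

/-- A character of degree 1 is multiplicative. -/
lemma IrrKP.exists_monoidHom {G : Type} [Group G] {k : Subfield ℂ} {p : ℕ}
    {χ : G → ℂ} (hχ : χ ∈ IrrKP G k p) (h1 : χ 1 = 1) : ∃ μ : G →* ℂ, ∀ g, μ g = χ g := by
  obtain ⟨V, hV, rfl, -⟩ := hχ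
  rw [V.char_one, Nat.cast_eq_one] at h1
  have hs : ∀ f : V →ₗ[ℂ] V, f = LinearMap.trace ℂ V f • (1 : V →ₗ[ℂ] V) := by
    intro f
    obtain ⟨c, hc⟩ : ∃ c : ℂ, f = c • (1 : V →ₗ[ℂ] V) := by
      obtain ⟨v, hv, hv'⟩ := finrank_eq_one_iff'.1 h1
      obtain ⟨c, hc⟩ := hv' (f v)
      refine ⟨c, LinearMap.ext fun w => ?_⟩
      obtain ⟨d, rfl⟩ := hv' w
      rw [map_smul, ← hc]
      simp only [LinearMap.smul_apply, Module.End.one_apply]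
      exact smul_comm d c v
    conv_rhs => rw [hc]
    simp [h1, hc]
  refine ⟨{ toFun := V.character, map_one' := by simp [h1], map_mul' := fun a b => ?_ },
    fun g => rfl⟩
  simp only [FDRep.character]
  rw [map_mul]
  conv_lhs => rw [hs (V.ρ a)]
  simp

lemma acdKP_eq (G : Type) [Group G] [Fintype G] (k : Subfield ℂ) (p : ℕ) :
    acdKP G k p = (∑ χ ∈ (finite_IrrKP G k p).toFinset, (χ 1).re) /
      (finite_IrrKP G k p).toFinset.card := by
  rw [acdKP, finsum_mem_eq_finite_toFinset_sum _ (finite_IrrKP G k p),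
    Nat.card_coe_set_eq, Set.ncard_eq_toFinset_card _ (finite_IrrKP G k p)]

open scoped commutatorElement in
/-- A normal subgroup meeting `G'` trivially is central, since `[G, K] ≤ K ∩ G'`. -/
lemma mem_center_of_mem {G : Type} [Group G] {K : Subgroup G} [hK : K.Normal]
    (hKG' : K ⊓ commutator G = ⊥) {z : G} (hz : z ∈ K) : z ∈ Subgroup.center G := by
  rw [Subgroup.mem_center_iff]
  intro g
  have h1 : ⁅g, z⁆ ∈ K ⊓ commutator G :=
    ⟨K.mul_mem (hK.conj_mem z hz g) (K.inv_mem hz),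
      Subgroup.commutator_mem_commutator (Subgroup.mem_top g) (Subgroup.mem_top z)⟩
  rw [hKG', Subgroup.mem_bot] at h1
  exact commutatorElement_eq_one_iff_mul_comm.1 h1

theorem acdKP_quotient_le_of_minimal_normal_trivial_meet_commutator
    (k : Subfield ℂ) (p : ℕ) (hp : p.Prime)
    (G : Type) [Group G] [Fintype G] (hG : Odd (Nat.card G))
    (K : Subgroup G) [K.Normal] (hKne : K ≠ ⊥)
    (hKmin : ∀ N : Subgroup G, N.Normal → N ≤ K → N = ⊥ ∨ N = K)
    (hKG' : K ⊓ commutator G = ⊥)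
    (h : acdKP G k p ≤ 3) :
    acdKP (G ⧸ K) k p ≤ acdKP G k p := by
  classical
  obtain ⟨z, hzK, hz1⟩ := K.bot_or_exists_ne_one.resolve_left hKne
  have hzc := mem_center_of_mem hKG' hzK
  have hzp : Subgroup.zpowers z = K := by
    refine (hKmin _ ⟨fun n hn g => ?_⟩ ?_).resolve_left ?_
    · have hnc : n ∈ Subgroup.center G := (Subgroup.zpowers_le.2 hzc) hn
      rwa [Subgroup.mem_center_iff.1 hnc g, mul_inv_cancel_right]
    · rwa [Subgroup.zpowers_le]
    · rwa [Subgroup.zpowers_eq_bot]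
  rw [acdKP_eq] at h ⊢
  rw [acdKP_eq]
  set S := (finite_IrrKP G k p).toFinset with hS
  set T := (finite_IrrKP (G ⧸ K) k p).toFinset with hT
  have memS : ∀ {χ}, χ ∈ S ↔ χ ∈ IrrKP G k p := by simp [hS]
  have memT : ∀ {χ}, χ ∈ T ↔ χ ∈ IrrKP (G ⧸ K) k p := by simp [hT]
  have hT0 : 0 < T.card := Finset.card_pos.2 ⟨_, memT.2 (one_mem_IrrKP _ k hp)⟩
  have mkz : ((z : G) : G ⧸ K) = 1 := (QuotientGroup.eq_one_iff z).2 hzK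
  let infl : (G ⧸ K → ℂ) → (G → ℂ) := fun ψ g => ψ g
  have infl_inj : Function.Injective infl := by
    intro ψ ψ' he
    ext x
    obtain ⟨g, rfl⟩ := QuotientGroup.mk_surjective x
    exact congrFun he g
  -- Is there a linear character in `IrrKP G k p` that is nontrivial on `K`?
  by_cases hlin : ∃ μ ∈ IrrKP G k p, μ 1 = 1 ∧ μ z ≠ 1
  · obtain ⟨μ', hμ', hμ1, hμz⟩ := hlin
    obtain ⟨μ, hμ⟩ := IrrKP.exists_monoidHom hμ' hμ1
    have hμk : ∀ g, μ g ∈ k := by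
      obtain ⟨V, -, -, hk, -⟩ := hμ'
      exact fun g => by rw [hμ]; exact hk g
    rw [← hμ] at hμz
    have hμ0 : ∀ g, μ g ≠ 0 := fun g h0 => by
      have : μ g * μ g⁻¹ = 1 := by rw [← map_mul, mul_inv_cancel, map_one]
      rw [h0, zero_mul] at this
      exact zero_ne_one this
    have hker : μ.ker ⊓ K = ⊥ := by
      refine (hKmin _ inferInstance inf_le_right).resolve_right fun he => hμz ?_
      have : z ∈ μ.ker ⊓ K := by rwa [he]
      exact this.1
    have hprim : IsPrimitiveRoot (μ z) (orderOf z) := by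
      refine ⟨by rw [← map_pow, pow_orderOf_eq_one, map_one], fun l hl => ?_⟩
      rw [orderOf_dvd_iff_pow_eq_one, ← Subgroup.mem_bot, ← hker]
      exact ⟨MonoidHom.mem_ker.2 (by rw [map_pow, hl]), K.pow_mem hzK l⟩
    have hq : 0 < orderOf z := orderOf_pos z
    -- Every member of `IrrKP G k p` is uniquely `μ ^ i` times an inflated character, `i < |K|`.
    let F : ℕ × (G ⧸ K → ℂ) → (G → ℂ) := fun x g => (μ ^ x.1) g * infl x.2 g
    have hpk : ∀ i g, (μ ^ i) g ∈ k := fun i g => by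
      rw [MonoidHom.pow_apply]; exact pow_mem (hμk g) i
    have hSF : S = (Finset.range (orderOf z) ×ˢ T).image F := by
      ext χ
      simp only [Finset.mem_image, Finset.mem_product, Finset.mem_range, Prod.exists]
      constructor
      · intro hχ
        rw [memS] at hχ
        have hne := IrrKP.apply_one_ne_zero hχ
        obtain ⟨c, hc, hcχ⟩ : ∃ c : ℂ, c ^ orderOf z = 1 ∧ χ z = c * χ 1 := by
          obtain ⟨V, hV, rfl, -⟩ := hχ
          obtain ⟨c, hc⟩ := V.exists_apply_eq_smul_of_mem_center hzc
          refine ⟨c, ?_, by simp [FDRep.character, hc]⟩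
          have h2 : V.ρ (z ^ orderOf z) = c ^ orderOf z • (1 : V →ₗ[ℂ] V) := by
            rw [map_pow, hc, smul_pow, one_pow]
          rw [pow_orderOf_eq_one] at h2
          have h3 : V.character 1 = c ^ orderOf z * V.character 1 := by
            conv_lhs => rw [FDRep.character, h2]
            simp
          exact (mul_right_cancel₀ hne (by rw [← h3, one_mul])).symm
        have : NeZero (orderOf z) := ⟨hq.ne'⟩
        obtain ⟨i, hi, rfl⟩ := hprim.eq_pow_of_pow_eq_one hc
        have htw := IrrKP.twist hχ (invMonoidHom.comp (μ ^ i)) fun g => k.inv_mem (hpk i g)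
        obtain ⟨ψ, hψ, he⟩ := IrrKP.exists_deflate K hzc hzp htw (by
          have := pow_ne_zero i (hμ0 z)
          simp [hcχ, this])
        refine ⟨i, ψ, ⟨hi, memT.2 hψ⟩, funext fun g => ?_⟩
        have hg : ((μ g) ^ i)⁻¹ * χ g = ψ g := by simpa using congrFun he g
        have := pow_ne_zero i (hμ0 g)
        simp only [F, infl, ← hg, MonoidHom.pow_apply]
        field_simp
      · rintro ⟨i, ψ, ⟨-, hψ⟩, rfl⟩
        exact memS.2 (IrrKP.twist (IrrKP.inflate K (memT.1 hψ)) (μ ^ i) (hpk i))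
    have hinj : Set.InjOn F (Finset.range (orderOf z) ×ˢ T : Finset _) := by
      rintro ⟨i, ψ⟩ hx ⟨j, ψ'⟩ hy he
      simp only [Finset.coe_product, Set.mem_prod, Finset.mem_coe, Finset.mem_range] at hx hy
      have e1 : ψ 1 = ψ' 1 := by simpa [F, infl] using congrFun he 1
      have e2 : μ z ^ i * ψ 1 = μ z ^ j * ψ' 1 := by
        simpa [F, infl, mkz] using congrFun he z
      rw [← e1] at e2
      obtain rfl := hprim.pow_inj hx.1 hy.1
        (mul_right_cancel₀ (IrrKP.apply_one_ne_zero (memT.1 hx.2)) e2)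
      refine Prod.ext rfl (infl_inj (funext fun g => ?_))
      exact mul_left_cancel₀ (by rw [MonoidHom.pow_apply]; exact pow_ne_zero _ (hμ0 g))
        (congrFun he g)
    rw [hSF, Finset.sum_image hinj, Finset.card_image_of_injOn hinj, Finset.sum_product,
      Finset.card_product]
    have : ∀ i ψ, F (i, ψ) 1 = ψ 1 := fun i ψ => by simp [F, infl]
    simp only [this, Finset.sum_const, Finset.card_range, nsmul_eq_mul, Nat.cast_mul]
    rw [mul_div_mul_left _ _ (by exact_mod_cast hq.ne')]
  · push Not at hlin
    have hsplit : S.filter (fun χ => χ z = χ 1) = T.image infl := by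
      ext χ
      simp only [Finset.mem_filter, Finset.mem_image, memS, memT]
      constructor
      · rintro ⟨hχ, h1⟩
        obtain ⟨ψ, hψ, rfl⟩ := IrrKP.exists_deflate K hzc hzp hχ h1
        exact ⟨ψ, hψ, rfl⟩
      · rintro ⟨ψ, hψ, rfl⟩
        exact ⟨IrrKP.inflate K hψ, by simp [infl, mkz]⟩
    -- The members of `IrrKP G k p` that are not inflated from `G ⧸ K`; all have degree at least 3.
    set U := S.filter (fun χ => ¬ χ z = χ 1) with hU
    have hU3 : (U.card : ℝ) * 3 ≤ ∑ χ ∈ U, (χ 1).re := by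
      rw [← nsmul_eq_mul]
      refine Finset.card_nsmul_le_sum _ _ _ fun χ hχ => ?_
      rw [hU, Finset.mem_filter, memS] at hχ
      obtain ⟨d, hd, hd1 | hd3⟩ := IrrKP.degree hG hχ.1
      · have h1 : χ 1 = 1 := by rw [hd, hd1, Nat.cast_one]
        exact absurd ((hlin χ hχ.1 h1).trans h1.symm) hχ.2
      · rw [hd, Complex.natCast_re]; exact_mod_cast hd3
    have hsum : ∑ χ ∈ S, (χ 1).re = ∑ ψ ∈ T, (ψ 1).re + ∑ χ ∈ U, (χ 1).re := by
      rw [← Finset.sum_filter_add_sum_filter_not S (fun χ => χ z = χ 1), hsplit,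
        Finset.sum_image infl_inj.injOn]
      rfl
    have hcard : (S.card : ℝ) = T.card + U.card := by
      rw [← Finset.card_filter_add_card_filter_not (s := S) (fun χ => χ z = χ 1), hsplit,
        Finset.card_image_of_injective _ infl_inj]
      push_cast; rfl
    have hT0' : (0 : ℝ) < T.card := by exact_mod_cast hT0
    have hU0 : (0 : ℝ) ≤ U.card := by positivity
    rw [hsum, hcard] at h ⊢
    rw [div_le_iff₀ (by linarith)] at h
    rw [div_le_div_iff₀ hT0' (by linarith)]
    nlinarith
end

section
/- Let p be an odd prime with p ≡ 1 (mod 3), let V be a finite elementary abelian p-group on which a nontrivial finite abelian group H acts faithfully and irreducibly, and suppose the semidirect product G = V ⋊ H has odd order. Let k be a subfield of ℂ containing the primitive p-th roots of unity, and let t be the least common multiple of the orders of the roots of unity contained in k whose order divides |H|. If 3 divides t, then acd_k(G) ≥ 3(p+2)/(p+8). -/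
/-- The irreducible complex characters of `G` all of whose values lie in `k`. -/
noncomputable def IrrK (G : Type) [Group G] (k : Subfield ℂ) : Set (G → ℂ) :=
  {χ ∈ Irr G | ∀ g, χ g ∈ k}

/-- The average of the degrees of the `k`-valued irreducible characters of `G`. -/
noncomputable def acdK (G : Type) [Group G] (k : Subfield ℂ) : ℝ :=
  (∑ᶠ χ ∈ IrrK G k, (χ 1).re) / (Nat.card (IrrK G k))

/- `rootLcm k m` is the least common multiple of the orders of the roots of
unity contained in `k` whose order divides `m`. -/
open Classical in
noncomputable def rootLcm (k : Subfield ℂ) (m : ℕ) : ℕ :=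
  ((Nat.divisors m).filter fun n => ∃ z : ℂ, z ∈ k ∧ IsPrimitiveRoot z n).lcm id

open Finset

/-! ### Homomorphisms from finite groups to `ℂˣ` -/

section Orthogonality

variable {A : Type} [Group A] [Fintype A]

open Classical in
lemma sum_hom_mul_inv (a b : A →* ℂˣ) :
    ∑ x, (a x : ℂ) * (b x⁻¹ : ℂ) = if a = b then (Fintype.card A : ℂ) else 0 := by
  have h := sum_hom_units ((Units.coeHom ℂ).comp (a / b))
  have e : ((Units.coeHom ℂ).comp (a / b) = 1) ↔ a = b := by
    rw [← div_eq_one (a := a) (b := b)]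
    constructor
    · intro h
      ext x
      have := DFunLike.congr_fun h x
      simpa using this
    · intro h
      rw [h]; ext x; simp
  simp only [e] at h
  rw [show (∑ x, (a x : ℂ) * (b x⁻¹ : ℂ)) = ∑ g, ((Units.coeHom ℂ).comp (a / b)) g from ?_, h]
  · push_cast; rfl
  · refine Finset.sum_congr rfl fun x _ => ?_
    simp [div_eq_mul_inv]

end Orthogonality

section Dual

variable {A : Type} [CommGroup A] [Fintype A] [Fintype (A →* ℂˣ)]

lemma card_dual : Fintype.card (A →* ℂˣ) = Fintype.card A := by
  have : NeZero (Monoid.exponent A) := ⟨Monoid.exponent_ne_zero_of_finite⟩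
  have := CommGroup.card_monoidHom_of_hasEnoughRootsOfUnity A ℂ
  simpa only [Nat.card_eq_fintype_card] using this

open Classical in
lemma sum_dual_apply (x : A) :
    ∑ a : A →* ℂˣ, (a x : ℂ) = if x = 1 then (Fintype.card A : ℂ) else 0 := by
  have : NeZero (Monoid.exponent A) := ⟨Monoid.exponent_ne_zero_of_finite⟩
  have h := sum_hom_units ((Units.coeHom ℂ).comp (MonoidHom.eval (N := ℂˣ) x))
  have e : ((Units.coeHom ℂ).comp (MonoidHom.eval (N := ℂˣ) x) = 1) ↔ x = 1 := by
    rw [← CommGroup.forall_apply_eq_apply_iff A (M := ℂ) (g := x) (g' := 1)]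
    constructor
    · intro h a
      have := DFunLike.congr_fun h a
      simpa using this
    · intro h
      ext a
      simpa using h a
  simp only [e, card_dual] at h
  simpa using h

end Dual

/-! ### Irreducible characters of a finite group -/

section Irr

variable {G : Type} [Group G] [Fintype G]

lemma Irr_orthogonal {χ ψ : G → ℂ} (hχ : χ ∈ Irr G) (hψ : ψ ∈ Irr G) (hne : χ ≠ ψ) :
    ∑ g, χ g * ψ g⁻¹ = 0 := by
  obtain ⟨X, hX, rfl⟩ := hχ
  obtain ⟨Y, hY, rfl⟩ := hψ
  have hc : (Nat.card G : ℂ) ≠ 0 := by simp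
  have : Invertible (Nat.card G : ℂ) := invertibleOfNonzero hc
  have h := FDRep.char_orthonormal X Y
  rw [if_neg] at h
  · simpa [hc] using h
  · rintro ⟨i⟩
    exact hne (FDRep.char_iso i)

lemma Irr_apply_one_ne_zero {χ : G → ℂ} (hχ : χ ∈ Irr G) : χ 1 ≠ 0 := by
  obtain ⟨X, hX, rfl⟩ := hχ
  intro h0
  rw [FDRep.char_one] at h0
  have h1 : Module.finrank ℂ X = 0 := by exact_mod_cast h0
  have hs : Subsingleton X := Module.finrank_zero_iff.mp h1
  have hz : ∀ g, X.character g = 0 := fun g => by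
    have : X.ρ g = 0 := by
      ext v
      exact Subsingleton.elim _ _
    simp [FDRep.character, this]
  have := (FDRep.simple_iff_char_is_norm_one X).mp hX
  simp only [hz, mul_zero, Finset.sum_const_zero] at this
  exact Nat.card_pos.ne' (by exact_mod_cast this.symm : Nat.card G = 0)

lemma mem_Irr_of_norm_one {U : Type} [AddCommGroup U] [Module ℂ U] [Module.Finite ℂ U]
    (ρ : Representation ℂ G U) {χ : G → ℂ} (hρ : ∀ g, LinearMap.trace ℂ U (ρ g) = χ g)
    (hn : ∑ g, χ g * χ g⁻¹ = Nat.card G) : χ ∈ Irr G := by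
  have e : χ = (FDRep.of ρ).character := by
    funext g
    exact (hρ g).symm
  exact ⟨FDRep.of ρ, (FDRep.simple_iff_char_is_norm_one _).mpr (e ▸ hn), e⟩

end Irr

/-! ### The characters of a semidirect product of abelian groups -/

section Semidirect

variable {V : Type} [CommGroup V] {H : Type} [CommGroup H] {φ : H →* MulAut V}

/-- The inflation to `V ⋊ H` of a homomorphism `μ : H →* ℂˣ`. -/
noncomputable def linChar (φ : H →* MulAut V) (μ : H →* ℂˣ) : V ⋊[φ] H → ℂ := fun g => μ g.right

/-- The conjugate of `l : V →* ℂˣ` by `h : H`, that is, `v ↦ l (h • v)`. -/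
noncomputable def twist (φ : H →* MulAut V) (l : V →* ℂˣ) (h : H) : V →* ℂˣ :=
  l.comp (φ h).toMonoidHom

@[simp] lemma twist_apply (l : V →* ℂˣ) (h : H) (v : V) : twist φ l h v = l (φ h v) := rfl

open Classical in
/-- The character of `V ⋊ H` induced from `l : V →* ℂˣ`. -/
noncomputable def indChar [Fintype H] (φ : H →* MulAut V) (l : V →* ℂˣ) : V ⋊[φ] H → ℂ :=
  fun g => if g.right = 1 then ∑ x : H, (twist φ l x g.left : ℂ) else 0

/-- The representation of `V ⋊ H` on functions `H → ℂ` induced from `l : V →* ℂˣ`: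
`((v, h) • f) x = l (x • v) * f (x * h)`. -/
noncomputable def indRep (φ : H →* MulAut V) (l : V →* ℂˣ) :
    Representation ℂ (V ⋊[φ] H) (H → ℂ) where
  toFun g :=
    { toFun := fun f x => (l (φ x g.left) : ℂ) * f (x * g.right)
      map_add' := fun f f' => by ext x; simp [mul_add]
      map_smul' := fun c f => by ext x; simp; ring }
  map_one' := by ext; simp
  map_mul' g g' := by
    ext f x
    simp [mul_assoc]

lemma indRep_apply (l : V →* ℂˣ) (g : V ⋊[φ] H) (f : H → ℂ) (x : H) :
    indRep φ l g f x = (l (φ x g.left) : ℂ) * f (x * g.right) := rfl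

lemma linChar_one (μ : H →* ℂˣ) : linChar φ μ 1 = 1 := by simp [linChar]

lemma indChar_one [Fintype H] (l : V →* ℂˣ) : indChar φ l 1 = Fintype.card H := by
  simp [indChar]

lemma sum_semidirect [Fintype V] [Fintype H] [Fintype (V ⋊[φ] H)] (f : V ⋊[φ] H → ℂ) :
    ∑ g, f g = ∑ h : H, ∑ v : V, f ⟨v, h⟩ := by
  rw [Finset.sum_comm, ← Fintype.sum_prod_type']
  exact Fintype.sum_equiv SemidirectProduct.equivProd _ _ fun _ => rfl

lemma trace_indRep [Fintype H] (l : V →* ℂˣ) (g : V ⋊[φ] H) :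
    LinearMap.trace ℂ (H → ℂ) (indRep φ l g) = indChar φ l g := by
  classical
  rw [LinearMap.trace_eq_matrix_trace ℂ (Pi.basisFun ℂ H), Matrix.trace]
  simp only [Matrix.diag_apply, LinearMap.toMatrix_apply, Pi.basisFun_apply, Pi.basisFun_repr,
    indRep_apply, Pi.single_apply, mul_eq_left, indChar, twist_apply]
  split_ifs <;> simp

lemma linChar_mem_Irr [Fintype V] [Fintype H] (μ : H →* ℂˣ) : linChar φ μ ∈ Irr (V ⋊[φ] H) := by
  have : Fintype (V ⋊[φ] H) := Fintype.ofEquiv _ SemidirectProduct.equivProd.symm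
  refine mem_Irr_of_norm_one (U := ℂ)
    (((Module.toModuleEnd ℂ ℂ).toMonoidHom.comp ((Units.coeHom ℂ).comp
      (μ.comp SemidirectProduct.rightHom)))) (fun g => ?_) ?_
  · rw [LinearMap.trace_eq_matrix_trace ℂ (Module.Basis.singleton Unit ℂ), Matrix.trace]
    simp [linChar]
  · simp [linChar]

/-- If `H` acts freely on `V \ {1}`, the conjugates of `l ≠ 1` are distinct: for `h ≠ 1` the map
`v ↦ h • v / v` is injective, hence onto, and a homomorphism fixed by `h` is trivial on its
image. -/
lemma twist_injective [Finite V] (hfree : ∀ (h : H) (v : V), φ h v = v → h = 1 ∨ v = 1)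
    {l : V →* ℂˣ} (hl : l ≠ 1) : Function.Injective (twist φ l) := by
  intro x y hxy
  by_contra hne
  have hd : x⁻¹ * y ≠ 1 := fun h => hne (inv_mul_eq_one.mp h)
  let f : V →* V := (φ (x⁻¹ * y)).toMonoidHom / MonoidHom.id V
  have hf : ∀ v, f v = φ (x⁻¹ * y) v / v := fun v => rfl
  have hinj : Function.Injective f := by
    rw [injective_iff_map_eq_one]
    intro v hv
    rw [hf, div_eq_one] at hv
    exact (hfree _ _ hv).resolve_left hd
  have hsurj := Finite.surjective_of_injective hinj
  apply hl
  ext v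
  obtain ⟨w, hw⟩ := hsurj ((φ x).symm v)
  have hv : v = φ y w / φ x w := by
    have : v = φ x (f w) := by rw [hw]; simp
    rw [this, hf, map_div, ← MulAut.mul_apply, ← map_mul, mul_inv_cancel_left]
  have h2 := DFunLike.congr_fun hxy w
  simp only [twist_apply] at h2
  rw [hv, map_div, ← h2]
  simp

lemma indChar_mem_Irr [Fintype V] [Fintype H]
    (hfree : ∀ (h : H) (v : V), φ h v = v → h = 1 ∨ v = 1)
    {l : V →* ℂˣ} (hl : l ≠ 1) : indChar φ l ∈ Irr (V ⋊[φ] H) := by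
  classical
  have : Fintype (V ⋊[φ] H) := Fintype.ofEquiv _ SemidirectProduct.equivProd.symm
  refine mem_Irr_of_norm_one (indRep φ l) (trace_indRep l) ?_
  rw [sum_semidirect, Finset.sum_eq_single (1 : H)]
  · simp only [indChar, SemidirectProduct.inv_left, SemidirectProduct.inv_right, inv_one, map_one,
      if_true, MulAut.one_apply, Finset.sum_mul_sum]
    rw [Finset.sum_comm]
    simp_rw [Finset.sum_comm (s := (univ : Finset V)), sum_hom_mul_inv,
      (twist_injective hfree hl).eq_iff]
    rw [SemidirectProduct.card]
    simp [mul_comm]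
  · intro h _ hh
    simp [indChar, hh]
  · simp

lemma exists_twist_of_indChar_eq [Fintype V] [Fintype H] {l l' : V →* ℂˣ}
    (h : indChar φ l = indChar φ l') : ∃ x : H, twist φ l x = l' := by
  classical
  by_contra! hne
  have key : ∀ l₀ : V →* ℂˣ, ∑ v : V, indChar φ l₀ ⟨v, 1⟩ * (l' v⁻¹ : ℂ)
      = ∑ x : H, if twist φ l₀ x = l' then (Fintype.card V : ℂ) else 0 := by
    intro l₀
    simp only [indChar, if_true, Finset.sum_mul]
    rw [Finset.sum_comm]
    exact Finset.sum_congr rfl fun x _ => sum_hom_mul_inv _ _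
  have h1 := key l
  rw [h, key l'] at h1
  simp only [hne, if_false, Finset.sum_const_zero] at h1
  rw [← Finset.sum_filter, Finset.sum_const, nsmul_eq_mul, mul_eq_zero] at h1
  have h1' : twist φ l' 1 = l' := by ext v; simp
  rcases h1 with h1 | h1
  · have : #{x : H | twist φ l' x = l'} = 0 := by exact_mod_cast h1
    rw [Finset.card_eq_zero] at this
    have hm : (1 : H) ∈ ({x : H | twist φ l' x = l'} : Finset H) := by simp [h1']
    simp [this] at hm
  · simp at h1

open Classical in
/-- The regular character of `V ⋊ H` is the sum of the `linChar μ` and of the `indChar l` with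
`l ≠ 1`: each `H`-orbit of such `l` has `|H|` members, which is the multiplicity of `indChar l`. -/
lemma regular_decomposition [Fintype V] [Fintype H] [Fintype (V →* ℂˣ)] [Fintype (H →* ℂˣ)]
    (g : V ⋊[φ] H) :
    ∑ μ : H →* ℂˣ, linChar φ μ g + ∑ l ∈ univ.erase (1 : V →* ℂˣ), indChar φ l g
      = if g = 1 then (Fintype.card V * Fintype.card H : ℂ) else 0 := by
  have h1 : indChar φ (1 : V →* ℂˣ) g = ∑ μ : H →* ℂˣ, linChar φ μ g := by
    simp only [linChar, sum_dual_apply, indChar]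
    simp
  rw [← h1, Finset.add_sum_erase _ (fun l => indChar φ l g) (Finset.mem_univ _)]
  obtain ⟨v, h⟩ := g
  by_cases hh : h = 1
  · subst hh
    simp only [indChar, if_true]
    rw [Finset.sum_comm]
    simp only [twist_apply, sum_dual_apply]
    have e : (⟨v, 1⟩ : V ⋊[φ] H) = 1 ↔ v = 1 := by
      rw [SemidirectProduct.ext_iff]; simp
    simp only [e, EmbeddingLike.map_eq_one_iff]
    simp [mul_comm]
  · have e : (⟨v, h⟩ : V ⋊[φ] H) ≠ 1 := by
      rw [Ne, SemidirectProduct.ext_iff]; simp [hh]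
    rw [if_neg e]
    simp [indChar, hh]

lemma Irr_classification [Fintype V] [Fintype H]
    (hfree : ∀ (h : H) (v : V), φ h v = v → h = 1 ∨ v = 1)
    {χ : V ⋊[φ] H → ℂ} (hχ : χ ∈ Irr (V ⋊[φ] H)) :
    (∃ μ, χ = linChar φ μ) ∨ ∃ l, l ≠ 1 ∧ χ = indChar φ l := by
  classical
  have : Fintype (V ⋊[φ] H) := Fintype.ofEquiv _ SemidirectProduct.equivProd.symm
  have : Fintype (V →* ℂˣ) := Fintype.ofFinite _
  have : Fintype (H →* ℂˣ) := Fintype.ofFinite _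
  by_contra! hne
  obtain ⟨hlin, hind⟩ := hne
  have hsum : ∑ g, χ g * (∑ μ : H →* ℂˣ, linChar φ μ g⁻¹
      + ∑ l ∈ univ.erase (1 : V →* ℂˣ), indChar φ l g⁻¹) = 0 := by
    simp only [mul_add, Finset.mul_sum, Finset.sum_add_distrib]
    rw [Finset.sum_comm, Finset.sum_comm (t := univ.erase (1 : V →* ℂˣ))]
    rw [Finset.sum_eq_zero fun μ _ => Irr_orthogonal hχ (linChar_mem_Irr μ) (hlin μ),
      Finset.sum_eq_zero fun l hl => Irr_orthogonal hχ
        (indChar_mem_Irr hfree (Finset.ne_of_mem_erase hl)) (hind l (Finset.ne_of_mem_erase hl)),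
      add_zero]
  simp only [regular_decomposition, inv_eq_one] at hsum
  simp [Irr_apply_one_ne_zero hχ] at hsum

lemma indChar_mem_subfield [Fintype H] {p : ℕ} (hp : p.Prime) (hV : ∀ v : V, v ^ p = 1)
    (k : Subfield ℂ) (hkp : ∀ z : ℂ, IsPrimitiveRoot z p → z ∈ k) (l : V →* ℂˣ)
    (g : V ⋊[φ] H) : indChar φ l g ∈ k := by
  classical
  have hmem : ∀ v : V, (l v : ℂ) ∈ k := fun v => by
    have h1 : (l v : ℂ) ^ p = 1 := by
      rw [← Units.val_pow_eq_pow_val, ← map_pow, hV]; simp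
    by_cases h : (l v : ℂ) = 1
    · rw [h]; exact k.one_mem
    · refine hkp _ ?_
      have := orderOf_eq_prime_iff (p := p) (hp := ⟨hp⟩) |>.mpr ⟨h1, h⟩
      exact this ▸ IsPrimitiveRoot.orderOf _
  unfold indChar
  split_ifs
  · exact k.sum_mem fun x _ => hmem _
  · exact k.zero_mem

end Semidirect

/-! ### The bound -/

/-- After clearing denominators, right side minus left side has the coefficient `2 - 2 p ≤ 0` at
`L`, so the extreme case is `L = m`; there the inequality follows from `(m - 3) (b - 2) ≥ 0` and `m b ≥ p - 1`. -/
lemma numeric_bound {p L m b : ℝ} (hp : 1 ≤ p) (hL0 : 0 ≤ L) (hL : L ≤ m) (hm : 3 ≤ m)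
    (hb : 2 ≤ b) (hmb : p - 1 ≤ m * b) :
    3 * (p + 2) / (p + 8) ≤ (L + m * b) / (L + b) := by
  rw [div_le_div_iff₀ (by linarith) (by linarith)]
  have h1 : 0 ≤ (p - 1) * ((m - 3) * (b - 2)) :=
    mul_nonneg (by linarith) (mul_nonneg (by linarith) (by linarith))
  have h2 : 0 ≤ (p - 1) * (m - L) := mul_nonneg (by linarith) (by linarith)
  have h3 : 0 ≤ b * (m - 3) := mul_nonneg (by linarith) (by linarith)
  nlinarith

theorem acdK_lower_bound_abelian_one_mod_three
    (p : ℕ) (hp : p.Prime) (hpodd : Odd p) (hmod : p % 3 = 1)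
    (V : Type) [CommGroup V] [Fintype V] (hV : ∀ v : V, v ^ p = 1)
    (H : Type) [CommGroup H] [Fintype H] [Nontrivial H]
    (φ : H →* MulAut V) (hfaith : Function.Injective φ)
    (hirr : ∀ W : Subgroup V, (∀ (h : H) (v : V), v ∈ W → φ h v ∈ W) → W = ⊥ ∨ W = ⊤)
    (hG : Odd (Nat.card (V ⋊[φ] H)))
    (k : Subfield ℂ) (hkp : ∀ z : ℂ, IsPrimitiveRoot z p → z ∈ k)
    (ht : 3 ∣ rootLcm k (Nat.card H)) :
    3 * ((p : ℝ) + 2) / ((p : ℝ) + 8) ≤ acdK (V ⋊[φ] H) k := by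
  classical
  have : Fintype (V →* ℂˣ) := Fintype.ofFinite _
  have : Fintype (H →* ℂˣ) := Fintype.ofFinite _
  -- The fixed points of `h` form an `H`-invariant subgroup because `H` is abelian.
  have hfree : ∀ (h : H) (v : V), φ h v = v → h = 1 ∨ v = 1 := by
    intro h v hv
    let W : Subgroup V := (φ h).toMonoidHom.eqLocus (MonoidHom.id V)
    have hW : ∀ w, w ∈ W ↔ φ h w = w := fun w => Iff.rfl
    rcases hirr W (fun x w hw => by
      rw [hW] at hw ⊢
      rw [← MulAut.mul_apply, ← map_mul, mul_comm, map_mul, MulAut.mul_apply, hw]) with h0 | h0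
    · right
      have : v ∈ W := (hW v).mpr hv
      rwa [h0, Subgroup.mem_bot] at this
    · left
      apply hfaith
      ext w
      have : w ∈ W := h0 ▸ Subgroup.mem_top w
      simpa using (hW w).mp this
  have hVnt : Nontrivial V := by
    by_contra hs
    rw [not_nontrivial_iff_subsingleton] at hs
    obtain ⟨x, y, hxy⟩ := exists_pair_ne H
    exact hxy (hfaith (MulEquiv.ext fun v => Subsingleton.elim _ _))
  rw [SemidirectProduct.card, Nat.card_eq_fintype_card, Nat.card_eq_fintype_card,
    Nat.odd_mul] at hG
  obtain ⟨hqodd, hmodd⟩ := hG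
  obtain ⟨v₀, hv₀⟩ := exists_ne (1 : V)
  have hpq : p ≤ Fintype.card V := by
    have h1 : orderOf v₀ = p := by
      have := Fact.mk hp
      exact orderOf_eq_prime (hV v₀) hv₀
    exact Nat.le_of_dvd Fintype.card_pos (h1 ▸ orderOf_dvd_card)
  have hm3 : 3 ≤ Fintype.card H := by
    have := Fintype.one_lt_card (α := H)
    obtain ⟨c, hc⟩ := hmodd
    omega
  -- `H` acts freely on the nontrivial elements of `V`.
  have hmq : Fintype.card H ≤ Fintype.card V - 1 := by
    rw [← Finset.card_univ (α := V), ← Finset.card_erase_of_mem (Finset.mem_univ (1 : V)),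
      ← Finset.card_univ (α := H)]
    refine Finset.card_le_card_of_injOn (fun h => φ h v₀) (fun h _ => ?_) (fun x _ y _ hxy => ?_)
    · simpa using hv₀
    · have h1 : φ (x⁻¹ * y) v₀ = v₀ := by
        have hxy' : φ x v₀ = φ y v₀ := hxy
        rw [map_mul, MulAut.mul_apply, ← hxy', ← MulAut.mul_apply, ← map_mul]
        simp
      exact inv_mul_eq_one.mp ((hfree _ _ h1).resolve_right hv₀)
  set B : Finset (V ⋊[φ] H → ℂ) := (univ.erase (1 : V →* ℂˣ)).image (indChar φ) with hB
  set A : Finset (V ⋊[φ] H → ℂ) :=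
    ((univ : Finset (H →* ℂˣ)).image (linChar φ)).filter (fun χ => ∀ g, χ g ∈ k) with hA
  have hA1 : ∀ χ ∈ A, χ 1 = 1 := by
    intro χ hχ
    simp only [hA, Finset.mem_filter, Finset.mem_image] at hχ
    obtain ⟨⟨μ, -, rfl⟩, -⟩ := hχ
    exact linChar_one μ
  have hB1 : ∀ χ ∈ B, χ 1 = Fintype.card H := by
    intro χ hχ
    obtain ⟨l, -, rfl⟩ := Finset.mem_image.mp hχ
    exact indChar_one l
  have hdisj : Disjoint A B := by
    rw [Finset.disjoint_left]
    intro χ h1 h2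
    have := (hA1 χ h1).symm.trans (hB1 χ h2)
    have : (1 : ℕ) = Fintype.card H := by exact_mod_cast this
    omega
  have hIrr : IrrK (V ⋊[φ] H) k = ↑(A ∪ B) := by
    ext χ
    rw [Finset.mem_coe, Finset.mem_union]
    simp only [hA, hB, IrrK, Set.mem_ofPred_eq, Finset.mem_filter, Finset.mem_image]
    constructor
    · rintro ⟨hχ, hk⟩
      rcases Irr_classification hfree hχ with ⟨μ, rfl⟩ | ⟨l, hl, rfl⟩
      · exact Or.inl ⟨⟨μ, Finset.mem_univ _, rfl⟩, hk⟩
      · exact Or.inr ⟨l, by simpa using hl, rfl⟩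
    · rintro (⟨⟨μ, -, rfl⟩, hk⟩ | ⟨l, hl, rfl⟩)
      · exact ⟨linChar_mem_Irr μ, hk⟩
      · exact ⟨indChar_mem_Irr hfree (Finset.ne_of_mem_erase hl),
          indChar_mem_subfield hp hV k hkp l⟩
  have hAcard : A.card ≤ Fintype.card H := by
    rw [← card_dual (A := H)]
    exact (Finset.card_filter_le _ _).trans Finset.card_image_le
  have hBcard : Fintype.card V - 1 ≤ Fintype.card H * B.card := by
    rw [← card_dual (A := V), ← Finset.card_univ (α := V →* ℂˣ),
      ← Finset.card_erase_of_mem (Finset.mem_univ (1 : V →* ℂˣ))]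
    refine Finset.card_le_mul_card_image _ _ (fun χ hχ => ?_)
    obtain ⟨l, -, rfl⟩ := Finset.mem_image.mp hχ
    -- The fibre over `indChar l` lies in the orbit of `l`.
    calc _ ≤ ((univ : Finset H).image (twist φ l)).card := by
          refine Finset.card_le_card fun l' hl' => ?_
          obtain ⟨x, hx⟩ := exists_twist_of_indChar_eq (Finset.mem_filter.mp hl').2.symm
          exact Finset.mem_image.mpr ⟨x, Finset.mem_univ _, hx⟩
      _ ≤ Fintype.card H := Finset.card_image_le
  have hp2 := hp.two_le
  -- If `B` had one element, then `|H| = |V| - 1`, contradicting parity.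
  have hB2 : 2 ≤ B.card := by
    by_contra hlt
    obtain ⟨c, hc⟩ := hqodd
    obtain ⟨d, hd⟩ := hmodd
    have : B.card = 0 ∨ B.card = 1 := by omega
    rcases this with h | h <;> rw [h] at hBcard <;> omega
  have hnum : ∑ᶠ χ ∈ IrrK (V ⋊[φ] H) k, (χ 1).re = A.card + (Fintype.card H : ℝ) * B.card := by
    have hsA : ∑ χ ∈ A, (χ 1).re = ∑ _χ ∈ A, (1 : ℝ) :=
      Finset.sum_congr rfl fun χ hχ => by rw [hA1 χ hχ]; simp
    have hsB : ∑ χ ∈ B, (χ 1).re = ∑ _χ ∈ B, (Fintype.card H : ℝ) :=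
      Finset.sum_congr rfl fun χ hχ => by rw [hB1 χ hχ]; simp
    rw [hIrr, finsum_mem_coe_finset, Finset.sum_union hdisj, hsA, hsB]
    simp [mul_comm]
  have hden : (Nat.card (IrrK (V ⋊[φ] H) k) : ℝ) = A.card + B.card := by
    rw [hIrr, Nat.card_coe_set_eq, Set.ncard_coe_finset, Finset.card_union_of_disjoint hdisj]
    push_cast; rfl
  rw [acdK, hnum, hden]
  refine numeric_bound (by exact_mod_cast hp.one_le) (by positivity) (by exact_mod_cast hAcard)
    (by exact_mod_cast hm3) (by exact_mod_cast hB2) ?_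
  have : p ≤ Fintype.card H * B.card + 1 := by omega
  have : (p : ℝ) ≤ Fintype.card H * B.card + 1 := by exact_mod_cast this
  linarith
end

section
/- Let p be an odd prime, let V be a finite elementary abelian p-group on which a nonabelian finite group H acts faithfully and irreducibly, and suppose the semidirect product G = V ⋊ H has odd order. Then every H-orbit on Irr(V) \ {1_V} (the nonprincipal irreducible characters of V, with the induced H-action) has length at least 7, and at least one such orbit has length not divisible by p. Furthermore, among the H-orbits whose length is not divisible by p, either there are at least two H-orbits of length 7, or there is at least one H-orbit of length at least 9; and when p = 3, there is at least one such orbit of length at least 11. -/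
/-- The orbit of a character `α` of `V` under the action of `H` given by
`(h • α) v = α ((φ h)⁻¹ v)`. -/
noncomputable def charOrbit {V H : Type} [Group V] [Group H] (φ : H →* MulAut V)
    (α : V → ℂ) : Set (V → ℂ) :=
  {β | ∃ h : H, β = fun v => α ((φ h)⁻¹ v)}

theorem coe_mem_Irr {V : Type} [CommGroup V] [Fintype V] (ψ : V →* ℂˣ) :
    (fun v => (ψ v : ℂ)) ∈ Irr V := by
  let r : V →* (ℂ →ₗ[ℂ] ℂ) :=
    (Algebra.lmul ℂ ℂ).toMonoidHom.comp ((Units.coeHom ℂ).comp ψ)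
  have hc : ∀ v, (FDRep.of r).character v = ψ v := by
    intro v
    change LinearMap.trace ℂ ℂ (r v) = _
    have : r v = (ψ v : ℂ) • LinearMap.id := by
      ext; simp [r]
    rw [this, map_smul, LinearMap.trace_id]
    simp
  refine ⟨FDRep.of r, ?_, funext fun v => (hc v).symm⟩
  rw [FDRep.simple_iff_char_is_norm_one]
  simp [hc]

/-- An irreducible character of an abelian group is linear. By Schur's lemma every group element
acts by a scalar `c g`, so the character is `dim W * c`; having norm one forces `dim W = 1`. -/
theorem exists_hom_of_mem_Irr {V : Type} [CommGroup V] [Fintype V] {α : V → ℂ} (hα : α ∈ Irr V) :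
    ∃ ψ : V →* ℂˣ, α = fun v => (ψ v : ℂ) := by
  obtain ⟨W, hW, rfl⟩ := hα
  have hend : Module.finrank ℂ (W ⟶ W) = 1 := CategoryTheory.finrank_endomorphism_simple_eq_one ℂ W
  have hscal : ∀ g, ∃ c : ℂ, W.ρ g = c • LinearMap.id := by
    intro g
    -- As `V` is abelian, the action of `g` is itself an endomorphism of `W`.
    let f : W ⟶ W := ⟨Action.ρ W g, fun h => by
      change Action.ρ W g * Action.ρ W h = Action.ρ W h * Action.ρ W g
      rw [← map_mul, ← map_mul, mul_comm]⟩
    obtain ⟨c, hc⟩ := (finrank_eq_one_iff_of_nonzero' (CategoryTheory.CategoryStruct.id W)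
      (CategoryTheory.id_nonzero W)).mp hend f
    refine ⟨c, ?_⟩
    have := congrArg (fun t : W ⟶ W => t.hom.hom.hom) hc
    exact this.symm
  choose c hc using hscal
  have hchar : ∀ g, W.character g = c g * Module.finrank ℂ W := by
    intro g
    change LinearMap.trace ℂ W (W.ρ g) = _
    rw [hc, map_smul, LinearMap.trace_id]; simp
  have hn := (FDRep.simple_iff_char_is_norm_one W).mp hW
  have hne : (LinearMap.id : W →ₗ[ℂ] W) ≠ 0 := by
    intro h
    apply CategoryTheory.id_nonzero W
    ext x
    exact LinearMap.congr_fun h x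
  have hone : c 1 = 1 := by
    have h1 := hc 1
    rw [map_one] at h1
    have h2 : ((1 : ℂ) - c 1) • (LinearMap.id : W →ₗ[ℂ] W) = 0 := by
      rw [sub_smul, ← h1, one_smul]; exact sub_self _
    rcases smul_eq_zero.mp h2 with h | h
    · linear_combination -h
    · exact absurd h hne
  have hmul : ∀ a b, c (a * b) = c a * c b := by
    intro a b
    have h1 := hc (a * b)
    rw [map_mul, hc a, hc b] at h1
    have h2 : (c a * c b - c (a * b)) • (LinearMap.id : W →ₗ[ℂ] W) = 0 := by
      rw [sub_smul, ← h1, sub_eq_zero, mul_smul]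
      ext x; simp [smul_comm (c a)]
    rcases smul_eq_zero.mp h2 with h | h
    · linear_combination -h
    · exact absurd h hne
  have hdim : Module.finrank ℂ W = 1 := by
    have h1 : ∀ g, W.character g * W.character g⁻¹ = (Module.finrank ℂ W : ℂ) ^ 2 := by
      intro g
      have := hmul g g⁻¹
      rw [mul_inv_cancel, hone] at this
      rw [hchar, hchar]
      linear_combination (-(Module.finrank ℂ W : ℂ) ^ 2) * this
    simp only [h1, Finset.sum_const, Finset.card_univ, nsmul_eq_mul, Nat.card_eq_fintype_card] at hn
    have h2 : (Module.finrank ℂ W) ^ 2 = 1 := by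
      have h3 : (Fintype.card V : ℂ) ≠ 0 := by simp
      have : ((Module.finrank ℂ W : ℂ)) ^ 2 = 1 := by
        apply mul_left_cancel₀ h3; rw [hn, mul_one]
      exact_mod_cast this
    simpa using h2
  let m : V →* ℂ := { toFun := c, map_one' := hone, map_mul' := hmul }
  refine ⟨m.toHomUnits, funext fun v => ?_⟩
  rw [hchar, hdim]
  simp [m]

/-- A group of order dividing `15` is abelian: its Sylow subgroups are cyclic, and all normal by
the Sylow congruence, so it is cyclic. -/
theorem comm_of_card_dvd_fifteen {H : Type*} [Group H] [Finite H] (h : Nat.card H ∣ 15)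
    (a b : H) : a * b = b * a := by
  have hz : IsZGroup H := IsZGroup.of_squarefree
    (Squarefree.squarefree_of_dvd h
      ((Nat.squarefree_mul (m := 3) (n := 5) (by norm_num)).mpr
        ⟨Nat.prime_three.prime.squarefree, Nat.prime_five.prime.squarefree⟩))
  have hn : Group.IsNilpotent H := by
    refine ((Group.isNilpotent_of_finite_tfae (G := H)).out 0 3 rfl rfl).mpr ?_
    intro p hp P
    have h1 := card_sylow_modEq_one p H
    have h2 : Nat.card (Sylow p H) ∣ 15 :=
      (P.card_dvd_index.trans (Subgroup.index_dvd_card _)).trans h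
    by_cases hd : p ∣ 15
    · have h3 : Nat.card (Sylow p H) = 1 := by
        have h4 : p ∈ Nat.divisors 15 := by simp [hd]
        have h5 : Nat.card (Sylow p H) ∈ Nat.divisors 15 := by simp [h2]
        have e : Nat.divisors 15 = {1, 3, 5, 15} := by decide
        rw [e] at h4 h5
        generalize Nat.card (Sylow p H) = k at *
        have hp1 := hp.out.one_lt
        have hp15 : p ≠ 15 := by rintro rfl; exact absurd hp.out (by norm_num)
        simp only [Finset.mem_insert, Finset.mem_singleton] at h4 h5
        unfold Nat.ModEq at h1
        rcases h4 with rfl | rfl | rfl | rfl <;> rcases h5 with rfl | rfl | rfl | rfl <;> omega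
      have : Subsingleton (Sylow p H) := (Nat.card_eq_one_iff_unique.mp h3).1
      exact P.normal_of_subsingleton
    · obtain ⟨n, hn⟩ := (IsPGroup.iff_card.mp P.isPGroup')
      have h3 : Nat.card P ∣ 15 := (Subgroup.card_subgroup_dvd_card _).trans h
      have h4 : n = 0 := by
        by_contra h0
        exact hd ((dvd_pow_self p h0).trans (hn ▸ h3))
      have h5 : (P : Subgroup H) = ⊥ := by
        rw [← Subgroup.card_eq_one]; rw [h4, pow_zero] at hn; exact hn
      rw [h5]; infer_instance
  have hc : IsCyclic H := inferInstance
  exact hc.isMulCommutative.is_comm.comm a b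

theorem card_orbit_dvd_card {H X : Type*} [Group H] [MulAction H X] (x : X) :
    Nat.card (MulAction.orbit H x) ∣ Nat.card H := by
  rw [Nat.card_coe_set_eq, ← MulAction.index_stabilizer]
  exact Subgroup.index_dvd_card _

/-- If a nonabelian group of odd order acts faithfully on an orbit, the orbit has at least `7`
points. An orbit of smaller (odd) length has at most `5` points, so the group embeds in `S₅` and
its odd order divides `15`. -/
theorem seven_le_card {H X : Type*} [Group H] [Finite H] [MulAction H X]
    (hodd : Odd (Nat.card H)) (hna : ∃ a b : H, a * b ≠ b * a) (x : X)
    (hf : ∀ h : H, (∀ y ∈ MulAction.orbit H x, h • y = y) → h = 1) :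
    7 ≤ Nat.card (MulAction.orbit H x) := by
  obtain ⟨a, b, hab⟩ := hna
  by_contra hlt
  refine hab (comm_of_card_dvd_fifteen ?_ a b)
  have hfin : Finite (MulAction.orbit H x) := Set.finite_range _
  have hn : Nat.card (MulAction.orbit H x) ∣ Nat.card H := card_orbit_dvd_card x
  have hinj : Function.Injective (MulAction.toPermHom H (MulAction.orbit H x)) := by
    rw [injective_iff_map_eq_one]
    intro h hh
    refine hf h fun y hy => ?_
    exact congrArg Subtype.val (Equiv.ext_iff.mp hh ⟨y, hy⟩)
  have hd := Subgroup.card_dvd_of_injective _ hinj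
  rw [Nat.card_perm] at hd
  have hn' : Odd (Nat.card (MulAction.orbit H x)) := hodd.of_dvd_nat hn
  have h5 : Nat.card (MulAction.orbit H x) ≤ 5 := by
    obtain ⟨k, hk⟩ := hn'; omega
  have h120 : Nat.card H ∣ 8 * 15 := hd.trans (Nat.factorial_dvd_factorial h5)
  refine Nat.Coprime.dvd_of_dvd_mul_left ?_ h120
  exact (Nat.coprime_pow_right_iff (by norm_num : 0 < 3) _ 2).mpr hodd.coprime_two_right

/-- Counting argument modulo `p` for an odd-order group acting on a set of size divisible by `p`,
with a fixed point `x₀` off which all orbits have length at least `7`. If every other orbit of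
length prime to `p` had length `7` and there were only one of them, `p` would divide `1 + 7`. -/
theorem orbit_count {H X : Type*} [Group H] [Finite H] [Finite X] [MulAction H X]
    {p : ℕ} (hp : p.Prime) (hpodd : Odd p) (hodd : Odd (Nat.card H)) (hX : p ∣ Nat.card X) (x₀ : X)
    (hx₀ : ∀ h : H, h • x₀ = x₀) (h7 : ∀ x, x ≠ x₀ → 7 ≤ Nat.card (MulAction.orbit H x)) :
    (∃ x, x ≠ x₀ ∧ ¬ p ∣ Nat.card (MulAction.orbit H x)) ∧
    ((∃ x y, x ≠ x₀ ∧ y ≠ x₀ ∧ MulAction.orbit H x ≠ MulAction.orbit H y ∧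
      ¬ p ∣ Nat.card (MulAction.orbit H x) ∧ ¬ p ∣ Nat.card (MulAction.orbit H y) ∧
      Nat.card (MulAction.orbit H x) = 7 ∧ Nat.card (MulAction.orbit H y) = 7) ∨
     (∃ x, x ≠ x₀ ∧ ¬ p ∣ Nat.card (MulAction.orbit H x) ∧
      9 ≤ Nat.card (MulAction.orbit H x) ∧ (p = 3 → 11 ≤ Nat.card (MulAction.orbit H x)))) := by
  classical
  let Ω := MulAction.orbitRel.Quotient H X
  have : Fintype Ω := Fintype.ofFinite _
  let f : Ω → ℕ := fun ω => Nat.card ω.orbit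
  have hsum : ∑ ω, f ω = Nat.card X := by
    rw [Nat.card_congr (MulAction.selfEquivSigmaOrbits' H X), Nat.card_sigma]
  let mk : X → Ω := Quotient.mk''
  have hf : ∀ x, f (mk x) = Nat.card (MulAction.orbit H x) := fun x => by
    simp only [f, mk, MulAction.orbitRel.Quotient.orbit_mk]
  have hmk : ∀ x y, mk x = mk y ↔ MulAction.orbit H x = MulAction.orbit H y := fun x y => by
    rw [MulAction.orbit_eq_iff]; exact Quotient.eq''
  have hfix : MulAction.orbit H x₀ = {x₀} := by
    ext y; simp [MulAction.mem_orbit_iff, hx₀, eq_comm]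
  have hf₀ : f (mk x₀) = 1 := by rw [hf, hfix]; simp
  have hne : ∀ x, mk x ≠ mk x₀ → x ≠ x₀ := fun x h e => h (e ▸ rfl)
  have hne' : ∀ x, x ≠ x₀ → mk x ≠ mk x₀ := fun x h e => by
    rw [hmk, hfix] at e
    exact h (by simpa [e] using MulAction.mem_orbit_self (M := H) x)
  have hex : ∃ x, x ≠ x₀ ∧ ¬ p ∣ Nat.card (MulAction.orbit H x) := by
    by_contra! hall
    have hd : p ∣ ∑ ω ∈ Finset.univ.erase (mk x₀), f ω := Finset.dvd_sum fun ω hω => by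
      induction ω using Quotient.inductionOn' with | _ x
      rw [show f (Quotient.mk'' x) = _ from hf x]
      exact hall x (hne x (Finset.ne_of_mem_erase hω))
    rw [← hsum, ← Finset.add_sum_erase _ _ (Finset.mem_univ (mk x₀)), hf₀] at hX
    exact hp.one_lt.ne' (Nat.dvd_one.mp ((Nat.dvd_add_left hd).mp hX))
  refine ⟨hex, ?_⟩
  by_contra! hcon
  obtain ⟨hA, hB⟩ := hcon
  have hodd' : ∀ x : X, Odd (Nat.card (MulAction.orbit H x)) := fun x =>
    hodd.of_dvd_nat (card_orbit_dvd_card (H := H) x)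
  have hseven : ∀ x, x ≠ x₀ → ¬ p ∣ Nat.card (MulAction.orbit H x) →
      Nat.card (MulAction.orbit H x) = 7 := by
    intro x hx hpx
    have h1 := h7 x hx
    have h2 := hB x hx hpx
    obtain ⟨k, hk⟩ := hodd' x
    -- An odd length above `7` is at least `9`; if prime to `3`, it is at least `11`.
    by_contra h3
    obtain ⟨rfl, h4⟩ := h2 (by omega)
    omega
  obtain ⟨x, hx, hpx⟩ := hex
  have hd : p ∣ ∑ ω ∈ (Finset.univ.erase (mk x₀)).erase (mk x), f ω :=
    Finset.dvd_sum fun ω hω => by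
      induction ω using Quotient.inductionOn' with | _ y
      rw [show f (Quotient.mk'' y) = _ from hf y]
      by_contra hpy
      have hy := hne y (Finset.ne_of_mem_erase (Finset.mem_of_mem_erase hω))
      have hyx : mk y ≠ mk x := Finset.ne_of_mem_erase hω
      exact hA y x hy hx (fun e => hyx ((hmk y x).mpr e)) hpy hpx
        (hseven y hy hpy) (hseven x hx hpx)
  rw [← hsum, ← Finset.add_sum_erase _ _ (Finset.mem_univ (mk x₀)), hf₀,
    ← Finset.add_sum_erase _ _ (Finset.mem_erase.mpr ⟨hne' x hx, Finset.mem_univ _⟩), hf,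
    hseven x hx hpx, ← add_assoc, Nat.dvd_add_left hd] at hX
  have h2 : p = 2 := (Nat.prime_dvd_prime_iff_eq hp Nat.prime_two).mp
    (hp.dvd_of_dvd_pow (show p ∣ 2 ^ 3 from hX))
  rw [h2] at hpodd
  exact absurd hpodd (by decide)

/-- The action of `H` on the dual group `V →* ℂˣ` given by `(h • ψ) v = ψ ((φ h)⁻¹ v)`. -/
@[reducible] def dualAction {V H : Type} [CommGroup V] [Group H] (φ : H →* MulAut V) :
    MulAction H (V →* ℂˣ) where
  smul h ψ := ψ.comp ((φ h)⁻¹ : MulAut V).toMonoidHom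
  one_smul ψ := by
    change ψ.comp ((φ 1)⁻¹ : MulAut V).toMonoidHom = ψ
    ext v; simp
  mul_smul a b ψ := by
    change ψ.comp ((φ (a * b))⁻¹ : MulAut V).toMonoidHom =
      (ψ.comp ((φ b)⁻¹ : MulAut V).toMonoidHom).comp ((φ a)⁻¹ : MulAut V).toMonoidHom
    ext v; simp

theorem dualAction_apply {V H : Type} [CommGroup V] [Group H] (φ : H →* MulAut V) (h : H)
    (ψ : V →* ℂˣ) (v : V) : letI := dualAction φ; (h • ψ) v = ψ ((φ h)⁻¹ v) := rfl

theorem coe_hom_injective {V : Type} [CommGroup V] :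
    Function.Injective fun (ψ : V →* ℂˣ) (v : V) => (ψ v : ℂ) := fun _ _ h =>
  MonoidHom.ext fun v => Units.ext (congrFun h v)

theorem charOrbit_coe {V H : Type} [CommGroup V] [Group H] (φ : H →* MulAut V) (ψ : V →* ℂˣ) :
    letI := dualAction φ
    charOrbit φ (fun v => (ψ v : ℂ)) =
      (fun (χ : V →* ℂˣ) (v : V) => (χ v : ℂ)) '' MulAction.orbit H ψ := by
  let := dualAction φ
  ext β
  constructor
  · rintro ⟨h, rfl⟩
    exact ⟨h • ψ, ⟨h, rfl⟩, rfl⟩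
  · rintro ⟨_, ⟨h, rfl⟩, rfl⟩
    exact ⟨h, rfl⟩

theorem card_charOrbit_coe {V H : Type} [CommGroup V] [Group H] (φ : H →* MulAut V)
    (ψ : V →* ℂˣ) : letI := dualAction φ
    Nat.card (charOrbit φ (fun v => (ψ v : ℂ))) = Nat.card (MulAction.orbit H ψ) := by
  rw [charOrbit_coe, Nat.card_image_of_injective coe_hom_injective]

/-- `H` acts faithfully on the orbit of a nonprincipal character: the common kernel of the orbit is
a proper `H`-invariant subgroup of `V`, hence trivial, so the orbit separates the points of `V`. -/
theorem eq_one_of_fixes_orbit {V H : Type} [CommGroup V] [Group H] (φ : H →* MulAut V)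
    (hfaith : Function.Injective φ)
    (hirr : ∀ W : Subgroup V, (∀ (h : H) (v : V), v ∈ W → φ h v ∈ W) → W = ⊥ ∨ W = ⊤)
    (ψ : V →* ℂˣ) (hψ : ψ ≠ 1) (h : H) (hh : letI := dualAction φ
      ∀ χ ∈ MulAction.orbit H ψ, h • χ = χ) : h = 1 := by
  let := dualAction φ
  let K : Subgroup V := ⨅ g : H, (g • ψ).ker
  have hK : ∀ v, v ∈ K ↔ ∀ g : H, ψ ((φ g)⁻¹ v) = 1 := fun v => by
    simp only [K, Subgroup.mem_iInf, MonoidHom.mem_ker, dualAction_apply]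
  have hinv : ∀ (k : H) (v : V), v ∈ K → φ k v ∈ K := fun k v hv => by
    rw [hK] at hv ⊢
    intro g
    simpa using hv (k⁻¹ * g)
  have hbot : K = ⊥ := by
    refine (hirr K hinv).resolve_right fun htop => hψ (MonoidHom.ext fun v => ?_)
    have hv : v ∈ K := htop ▸ Subgroup.mem_top v
    simpa using (hK v).mp hv 1
  have hfix : ∀ v, (φ h)⁻¹ v = v := fun v => by
    have hv : (φ h)⁻¹ v * v⁻¹ ∈ K := by
      rw [hK]
      intro g
      have := DFunLike.congr_fun (hh (g • ψ) ⟨g, rfl⟩) v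
      simp only [dualAction_apply] at this
      rw [map_mul, map_inv, map_mul, this, map_inv, mul_inv_cancel]
    rw [hbot, Subgroup.mem_bot, mul_inv_eq_one] at hv
    exact hv
  refine hfaith ?_
  rw [map_one, ← inv_eq_one]
  exact MulEquiv.ext hfix

theorem orbit_lengths_nonabelian
    (p : ℕ) (hp : p.Prime) (hpodd : Odd p)
    (V : Type) [CommGroup V] [Fintype V] (hV : ∀ v : V, v ^ p = 1)
    (H : Type) [Group H] [Fintype H] (hna : ∃ a b : H, a * b ≠ b * a)
    (φ : H →* MulAut V) (hfaith : Function.Injective φ)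
    (hirr : ∀ W : Subgroup V, (∀ (h : H) (v : V), v ∈ W → φ h v ∈ W) → W = ⊥ ∨ W = ⊤)
    (hG : Odd (Nat.card (V ⋊[φ] H))) :
    (∀ α ∈ Irr V, α ≠ (fun _ => 1) → 7 ≤ Nat.card (charOrbit φ α)) ∧
    (∃ α ∈ Irr V, α ≠ (fun _ => 1) ∧ ¬ p ∣ Nat.card (charOrbit φ α)) ∧
    ((∃ α ∈ Irr V, ∃ β ∈ Irr V, α ≠ (fun _ => 1) ∧ β ≠ (fun _ => 1) ∧
        charOrbit φ α ≠ charOrbit φ β ∧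
        ¬ p ∣ Nat.card (charOrbit φ α) ∧ ¬ p ∣ Nat.card (charOrbit φ β) ∧
        Nat.card (charOrbit φ α) = 7 ∧ Nat.card (charOrbit φ β) = 7) ∨
      (∃ α ∈ Irr V, α ≠ (fun _ => 1) ∧ ¬ p ∣ Nat.card (charOrbit φ α) ∧
        9 ≤ Nat.card (charOrbit φ α) ∧ (p = 3 → 11 ≤ Nat.card (charOrbit φ α)))) := by
  let := dualAction φ
  have hcard : Nat.card (V ⋊[φ] H) = Nat.card V * Nat.card H := by
    rw [Nat.card_congr SemidirectProduct.equivProd, Nat.card_prod]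
  have hHodd : Odd (Nat.card H) := (Nat.odd_mul.mp (hcard ▸ hG)).2
  have hdual : Nat.card (V →* ℂˣ) = Nat.card V :=
    CommGroup.card_monoidHom_of_hasEnoughRootsOfUnity V ℂ
  have hfin : Finite (V →* ℂˣ) := Nat.finite_of_card_ne_zero (hdual ▸ Nat.card_pos.ne')
  have hpV : p ∣ Nat.card V := by
    have hnt : Nontrivial V := by
      by_contra hs
      rw [not_nontrivial_iff_subsingleton] at hs
      obtain ⟨a, b, hab⟩ := hna
      exact hab (hfaith (MulEquiv.ext fun v => Subsingleton.elim _ _))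
    obtain ⟨v, hv⟩ := exists_ne (1 : V)
    rw [← orderOf_eq_prime (p := p) (hp := ⟨hp⟩) (hV v) hv]
    exact orderOf_dvd_natCard v
  have h7 : ∀ ψ : V →* ℂˣ, ψ ≠ 1 → 7 ≤ Nat.card (MulAction.orbit H ψ) := fun ψ hψ =>
    seven_le_card hHodd hna ψ fun h hh => eq_one_of_fixes_orbit φ hfaith hirr ψ hψ h hh
  have hone : ∀ ψ : V →* ℂˣ, ψ ≠ 1 → (fun v => (ψ v : ℂ)) ≠ fun _ => 1 := fun ψ hψ e =>
    hψ (coe_hom_injective (e.trans (by funext v; simp)))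
  obtain ⟨⟨ψ, hψ, hpψ⟩, hcases⟩ := orbit_count (H := H) hp hpodd hHodd (hdual ▸ hpV)
    (1 : V →* ℂˣ) (fun h => MonoidHom.ext fun v => rfl) h7
  refine ⟨fun α hα hα1 => ?_, ⟨_, coe_mem_Irr ψ, hone ψ hψ, card_charOrbit_coe φ ψ ▸ hpψ⟩, ?_⟩
  · obtain ⟨χ, rfl⟩ := exists_hom_of_mem_Irr hα
    rw [card_charOrbit_coe]
    exact h7 χ fun e => hα1 (by rw [e]; funext v; simp)
  · rcases hcases with ⟨χ, η, hχ, hη, hne, hpχ, hpη, hχ7, hη7⟩ | ⟨χ, hχ, hpχ, h9, h11⟩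
    · refine Or.inl ⟨_, coe_mem_Irr χ, _, coe_mem_Irr η, hone χ hχ, hone η hη, ?_, ?_⟩
      · rw [charOrbit_coe, charOrbit_coe]
        exact fun e => hne (coe_hom_injective.image_injective e)
      · rw [card_charOrbit_coe, card_charOrbit_coe]
        exact ⟨hpχ, hpη, hχ7, hη7⟩
    · refine Or.inr ⟨_, coe_mem_Irr χ, hone χ hχ, ?_⟩
      rw [card_charOrbit_coe]
      exact ⟨hpχ, h9, h11⟩
end
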